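/- Let G be a connected bridgeless cubic graph in which every 2-factor consists only of 5-cycles. Then every 3-edge-cut of G consists of the three edges incident to a common vertex (i.e., G is cyclically 4-edge-connected). -/

import Mathlib

/-! Multigraphs: vertex type `V`, edge type `E`, incidence map `ends : E → Sym2 V`. -/

namespace Mg

variable {V E : Type}

/-- No loops: no edge has equal endpoints. -/
def NoLoops (ends : E → Sym2 V) : Prop := ∀ e, ¬ (ends e).IsDiag

/-- Cubic: every vertex is incident with exactly three edges. -/
def IsCubic (ends : E → Sym2 V) : Prop := ∀ v, {e | v ∈ ends e}.ncard = 3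

/-- Reachability using only edges in `F`. -/
def Reach (ends : E → Sym2 V) (F : Set E) : V → V → Prop :=
  Relation.ReflTransGen (fun a b => ∃ e ∈ F, ends e = s(a, b))

/-- Connected. -/
def Connected (ends : E → Sym2 V) : Prop := ∀ v w, Reach ends Set.univ v w

/-- Bridgeless: the endpoints of each edge remain joined after its removal. -/
def Bridgeless (ends : E → Sym2 V) : Prop :=
  ∀ e v w, ends e = s(v, w) → Reach ends {f | f ≠ e} v w

/-- A 2-factor: every vertex is incident with exactly two edges of `F`. -/
def IsTwoFactor (ends : E → Sym2 V) (F : Set E) : Prop :=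
  ∀ v, {e | e ∈ F ∧ v ∈ ends e}.ncard = 2

/-- The component of `v` in the spanning subgraph with edge set `F`. -/
def component (ends : E → Sym2 V) (F : Set E) (v : V) : Set V := {w | Reach ends F v w}

/-- Every 2-factor consists only of 5-cycles: each component of any 2-factor
has exactly five vertices. -/
def TwoFactorsAllC5 (ends : E → Sym2 V) : Prop :=
  ∀ F : Set E, IsTwoFactor ends F → ∀ v, (component ends F v).ncard = 5

/-- A perfect matching: every vertex is incident with exactly one edge of `M`. -/
def IsPerfectMatching (ends : E → Sym2 V) (M : Set E) : Prop :=
  ∀ v, ∃! e, e ∈ M ∧ v ∈ ends e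

/-- A cycle of length `n`: `n` distinct vertices and `n` distinct edges, cyclically. -/
def HasCycle (ends : E → Sym2 V) (n : ℕ) : Prop :=
  ∃ (c : ZMod n → V) (f : ZMod n → E), Function.Injective c ∧ Function.Injective f ∧
    ∀ i, ends (f i) = s(c i, c (i + 1))

end Mg

/-!
By Plesník's theorem, which follows from Tutte's, a bridgeless cubic graph has a perfect matching
avoiding any two given edges; its complement is a 2-factor through both. If `A` has an edge cut of
size 2 or 3 and `e`, `f` are two of its edges, a 2-factor through `e` and `f` crosses the cut in
exactly these two edges, by parity. They lie on a common 5-cycle, all other 5-cycles avoid the cut,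
and so `A` meets that 5-cycle in `|A| mod 5` vertices.

* `|A| mod 5 ≠ 0`. A cut of size 2 cannot occur, since a 2-factor missing one of its edges would
  avoid the other as well, making `|A|` divisible by 5.
* If `|A| mod 5 = 1`, any two cut edges share their end in `A`.
* If `|A| mod 5 = 2`, the ends in `A` of any two cut edges are distinct and adjacent, so the three
  ends form a triangle. The triangle sends out only three edges, the same cut as `A`, so it is `A`,
  and `|A| = 3`, a contradiction.

As 5 divides the number of vertices, one of `A` and its complement has residue 1 or 2.
-/

open Set

namespace Mg

variable {V E : Type} {ends : E → Sym2 V} {F R : Set E} {A B K S : Set V} {e f : E} {k : ℕ}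

/-- The edge cut of a vertex set `A`: the edges with one end in `A` and one end outside `A`. -/
def cut (ends : E → Sym2 V) (A : Set V) : Set E :=
  {e | (∃ a ∈ ends e, a ∈ A) ∧ ∃ b ∈ ends e, b ∉ A}

/-- The edges with both ends in the vertex set `A`. -/
def inner (ends : E → Sym2 V) (A : Set V) : Set E := {e | ∀ v ∈ ends e, v ∈ A}

/-- A `k`-factor: every vertex is incident with exactly `k` edges of `F`. The notion specialises
definitionally to `IsTwoFactor` for `k = 2`. -/
def IsFactor (ends : E → Sym2 V) (F : Set E) (k : ℕ) : Prop :=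
  ∀ v, {e | e ∈ F ∧ v ∈ ends e}.ncard = k

theorem IsCubic.isFactor_univ (hc : IsCubic ends) : IsFactor ends univ 3 := fun v ↦ by
  simpa using hc v

theorem exists_ends_eq (ends : E → Sym2 V) (e : E) : ∃ a b, ends e = s(a, b) :=
  ⟨_, _, (Quot.out_eq (ends e)).symm⟩

theorem NoLoops.ne (hl : NoLoops ends) {a b : V} (he : ends e = s(a, b)) : a ≠ b := fun hab ↦
  hl e (by simpa [he] using hab)

/-! ### Edge cuts -/

theorem mem_cut_iff {a b : V} (he : ends e = s(a, b)) :
    e ∈ cut ends A ↔ ¬(a ∈ A ↔ b ∈ A) := by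
  simp only [cut, mem_ofPred_eq, he, Sym2.mem_iff]
  grind

theorem cut_compl (A : Set V) : cut ends Aᶜ = cut ends A := by
  ext e
  simp [cut, and_comm]

theorem cut_univ : cut ends univ = ∅ := by
  ext e
  simp [cut]

theorem cut_symmDiff (A B : Set V) :
    cut ends (symmDiff A B) = symmDiff (cut ends A) (cut ends B) := by
  ext e
  obtain ⟨a, b, he⟩ := exists_ends_eq ends e
  simp only [mem_symmDiff, mem_cut_iff he]
  tauto

theorem mem_cut_of_subset (hBA : B ⊆ A) (he : e ∈ cut ends A) {x : V} (hx : x ∈ ends e)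
    (hxB : x ∈ B) : e ∈ cut ends B :=
  let ⟨b, hb, hbA⟩ := he.2
  ⟨⟨x, hx, hxB⟩, b, hb, fun hbB ↦ hbA (hBA hbB)⟩

theorem mem_of_mem_cut_of_subset (hBA : B ⊆ A) (heA : e ∈ cut ends A) (heB : e ∈ cut ends B)
    {x : V} (hx : x ∈ ends e) (hxA : x ∈ A) : x ∈ B := by
  obtain ⟨y, he⟩ := hx
  rw [mem_cut_iff he] at heA heB
  grind

theorem notMem_inner_of_mem_cut (he : e ∈ cut ends A) : e ∉ inner ends A :=
  let ⟨b, hb, hbA⟩ := he.2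
  fun h ↦ hbA (h b hb)

theorem inter_cut_union_of_disjoint (hK : Disjoint F (cut ends K)) (A : Set V) :
    F ∩ cut ends (A ∩ K) ∪ F ∩ cut ends (A \ K) = F ∩ cut ends A ∧
      Disjoint (F ∩ cut ends (A ∩ K)) (F ∩ cut ends (A \ K)) := by
  rw [disjoint_left] at hK ⊢
  refine ⟨?_, fun e ↦ ?_⟩
  · ext e
    obtain ⟨a, b, he⟩ := exists_ends_eq ends e
    have := @hK e
    simp only [mem_union, mem_inter_iff, mem_sdiff, mem_cut_iff he] at this ⊢
    tauto
  · obtain ⟨a, b, he⟩ := exists_ends_eq ends e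
    have := @hK e
    simp only [mem_inter_iff, mem_sdiff, mem_cut_iff he] at this ⊢
    tauto

theorem Reach.exists_mem_cut {v w : V} (h : Reach ends F v w) (hv : v ∈ A) (hw : w ∉ A) :
    (F ∩ cut ends A).Nonempty := by
  induction h with
  | refl => exact absurd hv hw
  | @tail b c _ hbc ih =>
    obtain ⟨e, heF, he⟩ := hbc
    by_cases hb : b ∈ A
    · exact ⟨e, heF, (mem_cut_iff he).2 (by tauto)⟩
    · exact ih hb

theorem mem_component_self (v : V) : v ∈ component ends F v := Relation.ReflTransGen.refl

theorem disjoint_cut_component (F : Set E) (v : V) :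
    Disjoint F (cut ends (component ends F v)) := by
  refine disjoint_left.2 fun e heF ⟨⟨a, ha, hva⟩, b, hb, hvb⟩ ↦ hvb ?_
  obtain rfl | hab := eq_or_ne a b
  · exact hva
  · exact hva.tail ⟨e, heF, (Sym2.mem_and_mem_iff hab).1 ⟨ha, hb⟩⟩

theorem component_subset (hA : Disjoint F (cut ends A)) {v : V} (hv : v ∈ A) :
    component ends F v ⊆ A := fun _ hw ↦
  by_contra fun hwA ↦ (Reach.exists_mem_cut hw hv hwA).ne_empty hA.inter_eq

theorem dvd_ncard_of_disjoint_cut [Finite V] (h : ∀ v, (component ends F v).ncard = k)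
    (hA : Disjoint F (cut ends A)) : k ∣ A.ncard := by
  induction hn : A.ncard using Nat.strong_induction_on generalizing A with
  | _ n ih =>
    subst hn
    obtain rfl | ⟨v, hv⟩ := A.eq_empty_or_nonempty
    · simp
    have hdisj : Disjoint F (cut ends (A \ component ends F v)) := by
      have hunion := (inter_cut_union_of_disjoint (disjoint_cut_component (ends := ends) F v) A).1
      rw [hA.inter_eq, union_empty_iff] at hunion
      exact disjoint_iff_inter_eq_empty.2 hunion.2
    rw [← ncard_sdiff_add_ncard_of_subset (component_subset hA hv), h v]
    refine (ih _ (ncard_lt_ncard ?_) hdisj rfl).add (dvd_refl k)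
    exact ⟨sdiff_subset, fun hsub ↦ (hsub hv).2 (mem_component_self v)⟩

theorem Connected.cut_nonempty (hconn : Connected ends) {v w : V} (hv : v ∈ A) (hw : w ∉ A) :
    (cut ends A).Nonempty :=
  (Reach.exists_mem_cut (hconn v w) hv hw).mono inter_subset_right

theorem Connected.eq_of_cut_eq (hconn : Connected ends) (h : cut ends A = cut ends B) {x : V}
    (hxA : x ∈ A) (hxB : x ∈ B) : A = B := by
  by_contra hne
  obtain ⟨y, hy⟩ := symmDiff_nonempty.2 hne
  have hx : x ∉ symmDiff A B := by simp [mem_symmDiff, hxA, hxB]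
  exact (hconn.cut_nonempty hy hx).ne_empty (by simp [cut_symmDiff, h])

theorem Bridgeless.ncard_cut_ne_one (hb : Bridgeless ends) (A : Set V) :
    (cut ends A).ncard ≠ 1 := by
  intro h
  obtain ⟨e, he⟩ := ncard_eq_one.1 h
  obtain ⟨a, b, hab⟩ := exists_ends_eq ends e
  obtain ⟨f, hfe, hf⟩ : ({f | f ≠ e} ∩ cut ends A).Nonempty := by
    have hcross := (mem_cut_iff hab).1 (he ▸ mem_singleton e)
    by_cases ha : a ∈ A
    · exact (hb e a b hab).exists_mem_cut ha (by tauto)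
    · exact (hb e b a (hab.trans Sym2.eq_swap)).exists_mem_cut (by tauto) ha
  exact hfe (by simpa [he] using hf)

/-! ### Degree counting -/

theorem sum_ncard_comm {α β : Type*} [Fintype α] [Fintype β] (r : α → β → Prop) :
    ∑ a, {b | r a b}.ncard = ∑ b, {a | r a b}.ncard := by
  classical
  simp only [ncard_eq_toFinset_card', toFinset_ofPred, Finset.card_filter]
  exact Finset.sum_comm

theorem sum_ite_mem_eq_ncard_mul {α : Type*} [Fintype α] (s : Set α) [DecidablePred (· ∈ s)]
    (m : ℕ) : ∑ a, (if a ∈ s then m else 0) = s.ncard * m := by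
  rw [← Finset.sum_filter, Finset.sum_const, smul_eq_mul, ncard_eq_toFinset_card',
    filter_mem_univ_eq_toFinset]

theorem ncard_setOf_mem_and_mem_ends (hl : NoLoops ends) (A : Set V) (e : E)
    [Decidable (e ∈ cut ends A)] [Decidable (e ∈ inner ends A)] :
    {v | v ∈ A ∧ v ∈ ends e}.ncard =
      (if e ∈ cut ends A then 1 else 0) + 2 * (if e ∈ inner ends A then 1 else 0) := by
  obtain ⟨a, b, he⟩ := exists_ends_eq ends e
  have hset : {v | v ∈ A ∧ v ∈ ends e} = A ∩ {a, b} := by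
    ext
    simp only [he, Sym2.mem_iff, mem_ofPred_eq, mem_inter_iff, mem_insert_iff, mem_singleton_iff]
  have hinner : e ∈ inner ends A ↔ a ∈ A ∧ b ∈ A := by simp [inner, he]
  rw [hset]
  by_cases ha : a ∈ A <;> by_cases hb : b ∈ A <;>
    simp [ha, hb, hinner, mem_cut_iff he, inter_insert_of_mem, inter_insert_of_notMem,
      ncard_pair (hl.ne he)]

theorem IsFactor.ncard_mul [Finite V] [Finite E] (hl : NoLoops ends) (hF : IsFactor ends F k)
    (A : Set V) :
    A.ncard * k = (F ∩ cut ends A).ncard + 2 * (F ∩ inner ends A).ncard := by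
  classical
  have := Fintype.ofFinite V
  have := Fintype.ofFinite E
  have hvertex (v : V) : {e | v ∈ A ∧ e ∈ F ∧ v ∈ ends e}.ncard = if v ∈ A then k else 0 := by
    split_ifs with hv <;> simp [hv, ← hF v]
  have hedge (e : E) : {v | v ∈ A ∧ e ∈ F ∧ v ∈ ends e}.ncard =
      (if e ∈ F ∩ cut ends A then 1 else 0) + 2 * if e ∈ F ∩ inner ends A then 1 else 0 := by
    by_cases he : e ∈ F
    · simpa [he] using ncard_setOf_mem_and_mem_ends hl A e
    · simp [he]
  have hcount := sum_ncard_comm fun v e ↦ v ∈ A ∧ e ∈ F ∧ v ∈ ends e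
  simp only [hvertex, hedge, Finset.sum_add_distrib, ← Finset.mul_sum,
    sum_ite_mem_eq_ncard_mul, mul_one] at hcount
  exact hcount

theorem IsTwoFactor.even_ncard_inter_cut [Finite V] [Finite E] (hl : NoLoops ends)
    (hF : IsTwoFactor ends F) (A : Set V) : Even (F ∩ cut ends A).ncard := by
  have := IsFactor.ncard_mul hl hF A
  grind

theorem IsCubic.ncard_mul_three [Finite V] [Finite E] (hl : NoLoops ends) (hc : IsCubic ends)
    (A : Set V) : A.ncard * 3 = (cut ends A).ncard + 2 * (inner ends A).ncard := by
  simpa using hc.isFactor_univ.ncard_mul hl A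

theorem IsCubic.three_le_ncard_cut [Finite V] [Finite E] (hl : NoLoops ends) (hc : IsCubic ends)
    (hb : Bridgeless ends) (hA : Odd A.ncard) : 3 ≤ (cut ends A).ncard := by
  have := hc.ncard_mul_three hl A
  have := hb.ncard_cut_ne_one A
  grind

/-! ### Perfect matchings -/

theorem IsCubic.isTwoFactor_compl [Finite E] (hc : IsCubic ends) {M : Set E}
    (hM : IsPerfectMatching ends M) : IsTwoFactor ends Mᶜ := by
  intro v
  obtain ⟨e, ⟨heM, hve⟩, huniq⟩ := hM v
  have hset : {f | f ∈ Mᶜ ∧ v ∈ ends f} = {f | v ∈ ends f} \ {e} := by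
    ext f
    simp only [mem_ofPred_eq, mem_compl_iff, mem_sdiff, mem_singleton_iff]
    grind
  rw [hset, ncard_sdiff_singleton_of_mem (by exact hve), hc v]

/-- The simple graph underlying the spanning sub-multigraph with edge set `F`: two distinct vertices
are adjacent when some edge of `F` joins them. -/
abbrev underlying (ends : E → Sym2 V) (F : Set E) : SimpleGraph V :=
  SimpleGraph.fromEdgeSet (ends '' F)

theorem exists_isPerfectMatching_subset {M : (underlying ends F).Subgraph}
    (hM : M.IsPerfectMatching) : ∃ N ⊆ F, IsPerfectMatching ends N := by
  have hsurj : SurjOn ends F M.edgeSet := fun p hp ↦ by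
    have := M.edgeSet_subset hp
    rw [SimpleGraph.edgeSet_fromEdgeSet] at this
    exact this.1
  obtain ⟨N, hNF, hN⟩ := hsurj.exists_bijOn_subset
  refine ⟨N, hNF, fun v ↦ ?_⟩
  obtain ⟨w, hvw, huniq⟩ := SimpleGraph.Subgraph.isPerfectMatching_iff.1 hM v
  obtain ⟨e, heN, he⟩ := hN.surjOn (SimpleGraph.Subgraph.mem_edgeSet.2 hvw)
  refine ⟨e, ⟨heN, by simp [he]⟩, fun f ⟨hfN, x, hf⟩ ↦ hN.injOn hfN heN ?_⟩
  have hvx : M.Adj v x := by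
    rw [← SimpleGraph.Subgraph.mem_edgeSet, ← hf]
    exact hN.mapsTo hfN
  rw [he, hf, huniq x hvx]

section DisjointFamily

variable {ι : Type*} {C : ι → Set V}

theorem ncard_setOf_mem_cut_le_two [Finite ι] (hC : Pairwise (Function.onFun Disjoint C)) (e : E) :
    {i | e ∈ cut ends (C i)}.ncard ≤ 2 := by
  obtain ⟨a, b, he⟩ := exists_ends_eq ends e
  have hone (x : V) : {i | x ∈ C i}.ncard ≤ 1 :=
    (ncard_le_one).2 fun i hi j hj ↦ hC.eq (not_disjoint_iff.2 ⟨x, hi, hj⟩)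
  calc {i | e ∈ cut ends (C i)}.ncard
      ≤ ({i | a ∈ C i} ∪ {i | b ∈ C i}).ncard := by
        refine ncard_le_ncard fun i hi ↦ ?_
        simp only [mem_ofPred_eq, mem_cut_iff he, mem_union] at hi ⊢
        tauto
    _ ≤ {i | a ∈ C i}.ncard + {i | b ∈ C i}.ncard := ncard_union_le _ _
    _ ≤ 2 := add_le_add (hone a) (hone b)

theorem ncard_setOf_mem_cut_le_one [Finite ι] (hC : Pairwise (Function.onFun Disjoint C))
    (hCS : ∀ i, Disjoint (C i) S) (he : e ∈ cut ends S) : {i | e ∈ cut ends (C i)}.ncard ≤ 1 := by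
  obtain ⟨⟨s, hs, hsS⟩, a, ha, haS⟩ := he
  have hends : ends e = s(s, a) :=
    (Sym2.mem_and_mem_iff (ne_of_mem_of_not_mem hsS haS)).1 ⟨hs, ha⟩
  have hmem {i : ι} (hi : e ∈ cut ends (C i)) : a ∈ C i := by
    have hsC := disjoint_right.1 (hCS i) hsS
    rw [mem_cut_iff hends] at hi
    tauto
  exact (ncard_le_one).2 fun i hi j hj ↦ hC.eq (not_disjoint_iff.2 ⟨a, hmem hi, hmem hj⟩)

theorem sum_ncard_cut_le [Finite E] [Fintype ι] (hC : Pairwise (Function.onFun Disjoint C))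
    (hCS : ∀ i, Disjoint (C i) S) (hcut : ∀ i, cut ends (C i) \ R ⊆ cut ends S) :
    ∑ i, (cut ends (C i)).ncard ≤ R.ncard * 2 + (cut ends S).ncard := by
  classical
  have := Fintype.ofFinite E
  have hedge (e : E) : {i | e ∈ cut ends (C i)}.ncard ≤
      (if e ∈ R then 2 else 0) + if e ∈ cut ends S then 1 else 0 := by
    by_cases heR : e ∈ R
    · simpa [heR] using (ncard_setOf_mem_cut_le_two hC e).trans (Nat.le_add_right _ _)
    by_cases heS : e ∈ cut ends S
    · simpa [heR, heS] using ncard_setOf_mem_cut_le_one hC hCS heS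
    · have (i : ι) : e ∉ cut ends (C i) := fun hi ↦ heS (hcut i ⟨hi, heR⟩)
      simp [this]
  calc ∑ i, (cut ends (C i)).ncard
      = ∑ e, {i | e ∈ cut ends (C i)}.ncard := sum_ncard_comm fun i e ↦ e ∈ cut ends (C i)
    _ ≤ ∑ e, ((if e ∈ R then 2 else 0) + if e ∈ cut ends S then 1 else 0) :=
        Finset.sum_le_sum fun e _ ↦ hedge e
    _ = R.ncard * 2 + (cut ends S).ncard := by
        rw [Finset.sum_add_distrib, sum_ite_mem_eq_ncard_mul, sum_ite_mem_eq_ncard_mul, mul_one]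

end DisjointFamily

theorem cut_supp_sdiff_subset
    (c : ((⊤ : (underlying ends Rᶜ).Subgraph).deleteVerts S).coe.ConnectedComponent) :
    cut ends (Subtype.val '' c.supp) \ R ⊆ cut ends S := by
  rintro e ⟨⟨⟨_, ha, ⟨a, haS⟩, hac, rfl⟩, b, hb, hbc⟩, heR⟩
  have haS' : a ∉ S := by simpa using haS
  refine ⟨⟨b, hb, by_contra fun hbS ↦ hbc ?_⟩, a, ha, haS'⟩
  have hab : a ≠ b := by
    rintro rfl
    exact hbc ⟨_, hac, rfl⟩
  have hends : s(a, b) ∈ ends '' Rᶜ := ⟨e, heR, (Sym2.mem_and_mem_iff hab).1 ⟨ha, hb⟩⟩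
  refine ⟨⟨b, by simpa using hbS⟩, (c.mem_supp_congr_adj ?_).1 hac, rfl⟩
  simpa [haS', hbS, hab] using hends

theorem IsFactor.ncard_oddComponents_lt [Finite V] [Finite E] (hl : NoLoops ends)
    (hk : IsFactor ends univ k) (hodd : ∀ A : Set V, Odd A.ncard → k ≤ (cut ends A).ncard)
    (hR : R.ncard < k) (S : Set V) :
    ((⊤ : (underlying ends Rᶜ).Subgraph).deleteVerts S).coe.oddComponents.ncard < S.ncard + 2 := by
  set G' := ((⊤ : (underlying ends Rᶜ).Subgraph).deleteVerts S).coe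
  have := Fintype.ofFinite G'.oddComponents
  let C (c : G'.oddComponents) : Set V := Subtype.val '' c.1.supp
  have hC : Pairwise (Function.onFun Disjoint C) := fun c d hcd ↦
    disjoint_image_of_injective Subtype.val_injective <|
      SimpleGraph.pairwise_disjoint_supp_connectedComponent _ (Subtype.coe_ne_coe.2 hcd)
  have hCS (c : G'.oddComponents) : Disjoint (C c) S := by
    rw [disjoint_left]
    rintro _ ⟨v, -, rfl⟩
    simpa using v.2
  have hCodd (c : G'.oddComponents) : k ≤ (cut ends (C c)).ncard :=
    hodd _ ((ncard_image_of_injective _ Subtype.val_injective).symm ▸ c.2)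
  have hlower := Finset.card_nsmul_le_sum Finset.univ _ k fun c _ ↦ hCodd c
  have hupper := sum_ncard_cut_le hC hCS fun c ↦ cut_supp_sdiff_subset c.1
  have hS := hk.ncard_mul hl S
  rw [Finset.card_univ, fintypeCard_eq_ncard, smul_eq_mul] at hlower
  rw [univ_inter] at hS
  nlinarith

/-- Plesník's theorem for `k`-regular multigraphs. -/
theorem IsFactor.exists_isPerfectMatching_disjoint [Finite V] [Finite E] (hl : NoLoops ends)
    (hk : IsFactor ends univ k) (hodd : ∀ A : Set V, Odd A.ncard → k ≤ (cut ends A).ncard)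
    (hR : R.ncard < k) : ∃ M, IsPerfectMatching ends M ∧ Disjoint M R := by
  have hVeven : Even (Nat.card V) := by
    rw [← Nat.not_odd_iff_even, ← ncard_univ]
    intro hV
    have := hodd univ hV
    rw [cut_univ, ncard_empty] at this
    omega
  have htutte (S : Set V) : ¬(underlying ends Rᶜ).IsTutteViolator S := by
    rw [SimpleGraph.IsTutteViolator]
    have hlt := hk.ncard_oddComponents_lt hl hodd hR S
    have hparity := SimpleGraph.odd_ncard_oddComponents
      ((⊤ : (underlying ends Rᶜ).Subgraph).deleteVerts S).coe
    have hcompl : Nat.card ((⊤ : (underlying ends Rᶜ).Subgraph).deleteVerts S).verts =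
        Sᶜ.ncard := by
      simp [compl_eq_univ_sdiff]
    have := ncard_add_ncard_compl S
    grind
  obtain ⟨M, hM⟩ := SimpleGraph.tutte.2 htutte
  obtain ⟨N, hNR, hN⟩ := exists_isPerfectMatching_subset hM
  exact ⟨N, hN, subset_compl_iff_disjoint_right.1 hNR⟩

theorem exists_isTwoFactor_mem_mem [Finite V] [Finite E] (hl : NoLoops ends) (hc : IsCubic ends)
    (hb : Bridgeless ends) (e f : E) : ∃ F, IsTwoFactor ends F ∧ e ∈ F ∧ f ∈ F := by
  obtain ⟨M, hM, hdisj⟩ := hc.isFactor_univ.exists_isPerfectMatching_disjoint hl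
    (fun _ ↦ hc.three_le_ncard_cut hl hb) (R := {e, f})
    ((ncard_insert_le e {f}).trans_lt (by simp))
  rw [disjoint_right] at hdisj
  exact ⟨Mᶜ, hc.isTwoFactor_compl hM, hdisj (by simp), hdisj (by simp)⟩

theorem exists_isTwoFactor_notMem [Finite V] [Finite E] (hl : NoLoops ends) (hc : IsCubic ends)
    (hb : Bridgeless ends) (e : E) : ∃ F, IsTwoFactor ends F ∧ e ∉ F := by
  obtain ⟨v, w, he⟩ := exists_ends_eq ends e
  have hve : e ∈ {f | v ∈ ends f} := by simp [he]
  have hrest : ({f | v ∈ ends f} \ {e}).ncard = 2 := by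
    rw [ncard_sdiff_singleton_of_mem hve, hc v]
  obtain ⟨M, hM, hdisj⟩ := hc.isFactor_univ.exists_isPerfectMatching_disjoint hl
    (fun _ ↦ hc.three_le_ncard_cut hl hb) (hrest.trans_lt (by omega))
  obtain ⟨f, ⟨hfM, hvf⟩, -⟩ := hM v
  obtain rfl : f = e := by_contra fun hfe ↦ disjoint_left.1 hdisj hfM ⟨hvf, hfe⟩
  exact ⟨Mᶜ, hc.isTwoFactor_compl hM, not_not.2 hfM⟩

/-! ### Cuts and 2-factors with components of equal size -/

theorem IsTwoFactor.exists_subset_inter_cut_eq [Finite V] [Finite E] (hl : NoLoops ends)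
    (hF : IsTwoFactor ends F) (h : ∀ v, (component ends F v).ncard = k)
    (hA : (F ∩ cut ends A).ncard = 2) :
    ∃ B ⊆ A, F ∩ cut ends B = F ∩ cut ends A ∧ B.ncard = A.ncard % k := by
  obtain ⟨e, heF, heA⟩ : (F ∩ cut ends A).Nonempty := nonempty_of_ncard_ne_zero (by omega)
  obtain ⟨⟨x, hxe, hxA⟩, y, hye, hyA⟩ := heA
  have hxK := mem_component_self (ends := ends) (F := F) x
  have hK := disjoint_cut_component (ends := ends) F x
  have hKcard := h x
  set K := component ends F x
  have hyK : y ∈ K := by_contra fun hyK ↦ disjoint_left.1 hK heF ⟨⟨x, hxe, hxK⟩, y, hye, hyK⟩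
  obtain ⟨hunion, hdisj⟩ := inter_cut_union_of_disjoint hK A
  have hdiff : F ∩ cut ends (A \ K) = ∅ := by
    have hsum := ncard_union_eq hdisj
    have heven := hF.even_ncard_inter_cut hl (A ∩ K)
    have hpos : 0 < (F ∩ cut ends (A ∩ K)).ncard :=
      (ncard_pos).2 ⟨e, heF, ⟨x, hxe, hxA, hxK⟩, y, hye, fun hy ↦ hyA hy.1⟩
    rw [hunion, hA] at hsum
    rw [← ncard_eq_zero]
    grind
  rw [hdiff, union_empty] at hunion
  refine ⟨A ∩ K, inter_subset_left, hunion, ?_⟩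
  obtain ⟨m, hm⟩ := dvd_ncard_of_disjoint_cut h (disjoint_iff_inter_eq_empty.2 hdiff)
  have hlt : (A ∩ K).ncard < k :=
    hKcard ▸ ncard_lt_ncard ⟨inter_subset_right, fun hsub ↦ hyA (hsub hyK).1⟩
  rw [← ncard_inter_add_ncard_sdiff_eq_ncard A K, hm, Nat.add_mul_mod_self_left,
    Nat.mod_eq_of_lt hlt]

theorem exists_isTwoFactor_inter_cut_eq_pair [Finite V] [Finite E] (hl : NoLoops ends)
    (hc : IsCubic ends) (hb : Bridgeless ends) (hA : (cut ends A).ncard ≤ 3)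
    (he : e ∈ cut ends A) (hf : f ∈ cut ends A) (hef : e ≠ f) :
    ∃ F, IsTwoFactor ends F ∧ F ∩ cut ends A = {e, f} := by
  obtain ⟨F, hF, heF, hfF⟩ := exists_isTwoFactor_mem_mem hl hc hb e f
  have hsub : {e, f} ⊆ F ∩ cut ends A := by
    rintro g (rfl | rfl)
    exacts [⟨heF, he⟩, ⟨hfF, hf⟩]
  refine ⟨F, hF, (eq_of_subset_of_ncard_le hsub ?_).symm⟩
  have heven := hF.even_ncard_inter_cut hl A
  have hle : (F ∩ cut ends A).ncard ≤ (cut ends A).ncard := ncard_le_ncard inter_subset_right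
  rw [ncard_pair hef]
  grind

theorem exists_subset_inter_cut_eq_pair [Finite V] [Finite E] (hl : NoLoops ends)
    (hc : IsCubic ends) (hb : Bridgeless ends) (h5 : TwoFactorsAllC5 ends)
    (hA : (cut ends A).ncard ≤ 3) (he : e ∈ cut ends A) (hf : f ∈ cut ends A) (hef : e ≠ f) :
    ∃ F, IsTwoFactor ends F ∧ ∃ B ⊆ A, F ∩ cut ends B = {e, f} ∧ B.ncard = A.ncard % 5 := by
  obtain ⟨F, hF, hFA⟩ := exists_isTwoFactor_inter_cut_eq_pair hl hc hb hA he hf hef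
  obtain ⟨B, hBA, hFB, hB⟩ :=
    hF.exists_subset_inter_cut_eq hl (h5 F hF) (hFA.symm ▸ ncard_pair hef)
  exact ⟨F, hF, B, hBA, hFB.trans hFA, hB⟩

theorem ncard_mod_five_ne_zero [Finite V] [Finite E] (hl : NoLoops ends) (hc : IsCubic ends)
    (hb : Bridgeless ends) (h5 : TwoFactorsAllC5 ends) (hA₂ : 2 ≤ (cut ends A).ncard)
    (hA₃ : (cut ends A).ncard ≤ 3) : A.ncard % 5 ≠ 0 := by
  obtain ⟨e, he, f, hf, hef⟩ := (one_lt_ncard).1 hA₂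
  obtain ⟨F, -, B, -, hFB, hB⟩ := exists_subset_inter_cut_eq_pair hl hc hb h5 hA₃ he hf hef
  rw [← hB, Ne, ncard_eq_zero]
  rintro rfl
  obtain ⟨-, ⟨_, -, hempty⟩, -⟩ : e ∈ F ∩ cut ends ∅ := hFB ▸ mem_insert e {f}
  exact hempty

theorem ncard_cut_ne_two [Finite V] [Finite E] (hl : NoLoops ends) (hc : IsCubic ends)
    (hb : Bridgeless ends) (h5 : TwoFactorsAllC5 ends) : (cut ends A).ncard ≠ 2 := by
  intro hA
  obtain ⟨e, he⟩ : (cut ends A).Nonempty := nonempty_of_ncard_ne_zero (by omega)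
  obtain ⟨F, hF, heF⟩ := exists_isTwoFactor_notMem hl hc hb e
  have hle : (F ∩ cut ends A).ncard ≤ (cut ends A \ {e}).ncard :=
    ncard_le_ncard fun g ⟨hgF, hgA⟩ ↦ ⟨hgA, fun hge ↦ heF (hge ▸ hgF)⟩
  rw [ncard_sdiff_singleton_of_mem he, hA] at hle
  have hempty : F ∩ cut ends A = ∅ := by
    have := hF.even_ncard_inter_cut hl A
    rw [← ncard_eq_zero]
    grind
  have hdvd := dvd_ncard_of_disjoint_cut (h5 F hF) (disjoint_iff_inter_eq_empty.2 hempty)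
  exact ncard_mod_five_ne_zero hl hc hb h5 hA.ge (by omega) (Nat.mod_eq_zero_of_dvd hdvd)

/-! ### 3-edge-cuts -/

section

variable {x y : V}

theorem eq_of_ncard_mod_five_eq_one [Finite V] [Finite E] (hl : NoLoops ends)
    (hc : IsCubic ends) (hb : Bridgeless ends) (h5 : TwoFactorsAllC5 ends)
    (hA : (cut ends A).ncard ≤ 3) (hmod : A.ncard % 5 = 1)
    (he : e ∈ cut ends A) (hf : f ∈ cut ends A) (hef : e ≠ f)
    (hxe : x ∈ ends e) (hxA : x ∈ A) (hyf : y ∈ ends f) (hyA : y ∈ A) : x = y := by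
  obtain ⟨F, -, B, hBA, hFB, hB⟩ := exists_subset_inter_cut_eq_pair hl hc hb h5 hA he hf hef
  have heB : e ∈ F ∩ cut ends B := hFB ▸ by simp
  have hfB : f ∈ F ∩ cut ends B := hFB ▸ by simp
  exact (ncard_le_one).1 (by omega)
    x (mem_of_mem_cut_of_subset hBA he heB.2 hxe hxA)
    y (mem_of_mem_cut_of_subset hBA hf hfB.2 hyf hyA)

theorem mem_ends_of_mem_inner (hl : NoLoops ends) (hB : B.ncard = 2) (he : e ∈ inner ends B)
    (hx : x ∈ B) : x ∈ ends e := by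
  obtain ⟨a, b, hab⟩ := exists_ends_eq ends e
  have hsub : {a, b} ⊆ B := by
    rintro v (rfl | rfl) <;> exact he _ (by simp [hab])
  have hBfin : B.Finite := finite_of_ncard_ne_zero (by omega)
  have heq : {a, b} = B :=
    eq_of_subset_of_ncard_le hsub (by rw [ncard_pair (hl.ne hab), hB]) hBfin
  simpa [hab, ← heq] using hx

theorem IsTwoFactor.exists_mem_inner [Finite V] [Finite E] (hl : NoLoops ends)
    (hF : IsTwoFactor ends F) (hB : B.ncard = 2) (hFB : (F ∩ cut ends B).ncard = 2) :
    ∃ g ∈ F, g ∈ inner ends B := by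
  have hcount := IsFactor.ncard_mul hl hF B
  exact nonempty_of_ncard_ne_zero (s := F ∩ inner ends B) (by omega)

theorem IsTwoFactor.eq_or_eq [Finite E] (hF : IsTwoFactor ends F) {g : E} (hef : e ≠ f)
    (heF : e ∈ F) (hfF : f ∈ F) (hgF : g ∈ F) (hxe : x ∈ ends e) (hxf : x ∈ ends f)
    (hxg : x ∈ ends g) : g = e ∨ g = f := by
  have hsub : {e, f} ⊆ {h | h ∈ F ∧ x ∈ ends h} := by
    rintro h (rfl | rfl)
    exacts [⟨heF, hxe⟩, ⟨hfF, hxf⟩]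
  have heq := eq_of_subset_of_ncard_le hsub (by rw [hF x, ncard_pair hef])
  exact heq.symm.subset ⟨hgF, hxg⟩

theorem exists_ends_eq_of_ncard_mod_five_eq_two [Finite V] [Finite E] (hl : NoLoops ends)
    (hc : IsCubic ends) (hb : Bridgeless ends) (h5 : TwoFactorsAllC5 ends)
    (hA : (cut ends A).ncard ≤ 3) (hmod : A.ncard % 5 = 2)
    (he : e ∈ cut ends A) (hf : f ∈ cut ends A) (hef : e ≠ f)
    (hxe : x ∈ ends e) (hxA : x ∈ A) (hyf : y ∈ ends f) (hyA : y ∈ A) :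
    x ≠ y ∧ ∃ g, ends g = s(x, y) := by
  obtain ⟨F, hF, B, hBA, hFB, hB⟩ := exists_subset_inter_cut_eq_pair hl hc hb h5 hA he hf hef
  obtain ⟨heF, heB⟩ : e ∈ F ∩ cut ends B := hFB ▸ by simp
  obtain ⟨hfF, hfB⟩ : f ∈ F ∩ cut ends B := hFB ▸ by simp
  rw [hmod] at hB
  obtain ⟨g, hgF, hgB⟩ := hF.exists_mem_inner hl hB (hFB ▸ ncard_pair hef)
  have hxg := mem_ends_of_mem_inner hl hB hgB (mem_of_mem_cut_of_subset hBA he heB hxe hxA)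
  have hyg := mem_ends_of_mem_inner hl hB hgB (mem_of_mem_cut_of_subset hBA hf hfB hyf hyA)
  have hxy : x ≠ y := by
    rintro rfl
    rcases hF.eq_or_eq hef heF hfF hgF hxe hyf hxg with rfl | rfl
    exacts [notMem_inner_of_mem_cut heB hgB, notMem_inner_of_mem_cut hfB hgB]
  exact ⟨hxy, g, (Sym2.mem_and_mem_iff hxy).1 ⟨hxg, hyg⟩⟩

end

theorem ncard_cut_triangle_le [Finite V] [Finite E] (hl : NoLoops ends) (hc : IsCubic ends)
    {x y z : V} {a b c : E} (hxy : x ≠ y) (hxz : x ≠ z) (hyz : y ≠ z)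
    (ha : ends a = s(x, y)) (hb : ends b = s(x, z)) (hc' : ends c = s(y, z)) :
    (cut ends {x, y, z}).ncard ≤ 3 := by
  have hab : a ≠ b := fun h ↦ by simp [h, hb, hyz.symm, hxy] at ha
  have hac : a ≠ c := fun h ↦ by simp [h, hc', hxy.symm, hxz.symm] at ha
  have hbc : b ≠ c := fun h ↦ by simp [h, hc', hxy.symm, hyz] at hb
  have hinner : {a, b, c} ⊆ inner ends {x, y, z} := by
    rintro e (rfl | rfl | rfl) v hv <;> simp_all <;> tauto
  have hle := ncard_le_ncard hinner
  have hcount := hc.ncard_mul_three hl {x, y, z}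
  rw [ncard_eq_three.2 ⟨a, b, c, hab, hac, hbc, rfl⟩] at hle
  rw [ncard_eq_three.2 ⟨x, y, z, hxy, hxz, hyz, rfl⟩] at hcount
  omega

theorem ncard_mod_five_ne_two [Finite V] [Finite E] (hl : NoLoops ends) (hc : IsCubic ends)
    (hb : Bridgeless ends) (hconn : Connected ends) (h5 : TwoFactorsAllC5 ends)
    (hA : (cut ends A).ncard = 3) : A.ncard % 5 ≠ 2 := by
  intro hmod
  obtain ⟨e₁, e₂, e₃, h₁₂, h₁₃, h₂₃, hcut⟩ := ncard_eq_three.1 hA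
  have he₁ : e₁ ∈ cut ends A := by simp [hcut]
  have he₂ : e₂ ∈ cut ends A := by simp [hcut]
  have he₃ : e₃ ∈ cut ends A := by simp [hcut]
  obtain ⟨x, hx, hxA⟩ := he₁.1
  obtain ⟨y, hy, hyA⟩ := he₂.1
  obtain ⟨z, hz, hzA⟩ := he₃.1
  obtain ⟨hxy, a, ha⟩ := exists_ends_eq_of_ncard_mod_five_eq_two hl hc hb h5 hA.le hmod
    he₁ he₂ h₁₂ hx hxA hy hyA
  obtain ⟨hxz, b, hb'⟩ := exists_ends_eq_of_ncard_mod_five_eq_two hl hc hb h5 hA.le hmod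
    he₁ he₃ h₁₃ hx hxA hz hzA
  obtain ⟨hyz, c, hc'⟩ := exists_ends_eq_of_ncard_mod_five_eq_two hl hc hb h5 hA.le hmod
    he₂ he₃ h₂₃ hy hyA hz hzA
  have hTA : {x, y, z} ⊆ A := by
    rintro v (rfl | rfl | rfl) <;> assumption
  have hsub : cut ends A ⊆ cut ends {x, y, z} := by
    rw [hcut]
    rintro e (rfl | rfl | rfl)
    exacts [mem_cut_of_subset hTA he₁ hx (by simp), mem_cut_of_subset hTA he₂ hy (by simp),
      mem_cut_of_subset hTA he₃ hz (by simp)]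
  have hcutT : cut ends A = cut ends {x, y, z} := eq_of_subset_of_ncard_le hsub <|
    (ncard_cut_triangle_le hl hc hxy hxz hyz ha hb' hc').trans hA.ge
  have hcard : A.ncard = 3 := ncard_eq_three.2
    ⟨x, y, z, hxy, hxz, hyz, hconn.eq_of_cut_eq hcutT hxA (by simp)⟩
  omega

theorem exists_mem_ends_of_ncard_mod_five_eq_one [Finite V] [Finite E] (hl : NoLoops ends)
    (hc : IsCubic ends) (hb : Bridgeless ends) (h5 : TwoFactorsAllC5 ends)
    (hA : (cut ends A).ncard = 3) (hmod : A.ncard % 5 = 1) :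
    ∃ v, ∀ e ∈ cut ends A, v ∈ ends e := by
  obtain ⟨e, he⟩ : (cut ends A).Nonempty := nonempty_of_ncard_ne_zero (by omega)
  obtain ⟨x, hxe, hxA⟩ := he.1
  refine ⟨x, fun f hf ↦ ?_⟩
  obtain rfl | hef := eq_or_ne e f
  · exact hxe
  obtain ⟨y, hyf, hyA⟩ := hf.1
  rwa [eq_of_ncard_mod_five_eq_one hl hc hb h5 hA.le hmod he hf hef hxe hxA hyf hyA]

theorem exists_mem_ends_of_ncard_cut_eq_three [Finite V] [Finite E] (hl : NoLoops ends)
    (hc : IsCubic ends) (hb : Bridgeless ends) (hconn : Connected ends)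
    (h5 : TwoFactorsAllC5 ends) (hA : (cut ends A).ncard = 3) :
    ∃ v, ∀ e ∈ cut ends A, v ∈ ends e := by
  have hA' : (cut ends Aᶜ).ncard = 3 := cut_compl (ends := ends) A ▸ hA
  obtain ⟨e, -⟩ : (cut ends A).Nonempty := nonempty_of_ncard_ne_zero (by omega)
  obtain ⟨F, hF, -⟩ := exists_isTwoFactor_notMem hl hc hb e
  have hV : 5 ∣ (univ : Set V).ncard := dvd_ncard_of_disjoint_cut (h5 F hF) (by simp [cut_univ])
  have hsum := ncard_add_ncard_compl A
  rw [ncard_univ] at hV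
  have hzero := ncard_mod_five_ne_zero hl hc hb h5 (by omega) hA.le
  have htwo := ncard_mod_five_ne_two hl hc hb hconn h5 hA
  have htwo' := ncard_mod_five_ne_two hl hc hb hconn h5 hA'
  obtain hmod | hmod : A.ncard % 5 = 1 ∨ Aᶜ.ncard % 5 = 1 := by omega
  · exact exists_mem_ends_of_ncard_mod_five_eq_one hl hc hb h5 hA hmod
  · simpa only [cut_compl] using exists_mem_ends_of_ncard_mod_five_eq_one hl hc hb h5 hA' hmod

theorem three_le_ncard_cut [Finite V] [Finite E] (hl : NoLoops ends) (hc : IsCubic ends)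
    (hb : Bridgeless ends) (hconn : Connected ends) (h5 : TwoFactorsAllC5 ends) {v w : V}
    (hv : v ∈ A) (hw : w ∉ A) : 3 ≤ (cut ends A).ncard := by
  have hpos := (ncard_pos).2 (hconn.cut_nonempty hv hw)
  have hone := hb.ncard_cut_ne_one A
  have htwo := ncard_cut_ne_two (A := A) hl hc hb h5
  omega

end Mg

theorem stmt9 {V E : Type} [Fintype V] [Fintype E] (ends : E → Sym2 V)
    (hl : Mg.NoLoops ends) (hc : Mg.IsCubic ends) (hb : Mg.Bridgeless ends)
    (hconn : Mg.Connected ends) (h5 : Mg.TwoFactorsAllC5 ends) :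
    ∀ e₁ e₂ e₃ : E, e₁ ≠ e₂ → e₁ ≠ e₃ → e₂ ≠ e₃ →
      ¬ (∀ v w : V, Mg.Reach ends {f | f ≠ e₁ ∧ f ≠ e₂ ∧ f ≠ e₃} v w) →
      ∃ v : V, v ∈ ends e₁ ∧ v ∈ ends e₂ ∧ v ∈ ends e₃ := by
  intro e₁ e₂ e₃ h₁₂ h₁₃ h₂₃ hdisc
  push Not at hdisc
  obtain ⟨v, w, hvw⟩ := hdisc
  set F : Set E := {f | f ≠ e₁ ∧ f ≠ e₂ ∧ f ≠ e₃}
  set A := Mg.component ends F v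
  have hsub : Mg.cut ends A ⊆ {e₁, e₂, e₃} := fun f hf ↦ by
    have hfF : f ∉ F := disjoint_right.1 (Mg.disjoint_cut_component F v) hf
    simp only [F, mem_ofPred_eq] at hfF
    simpa [or_iff_not_imp_left] using hfF
  have hthree : ({e₁, e₂, e₃} : Set E).ncard = 3 := ncard_eq_three.2 ⟨_, _, _, h₁₂, h₁₃, h₂₃, rfl⟩
  have hcut : Mg.cut ends A = {e₁, e₂, e₃} := eq_of_subset_of_ncard_le hsub <| hthree.trans_le <|
    Mg.three_le_ncard_cut hl hc hb hconn h5 (Mg.mem_component_self v) hvw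
  obtain ⟨u, hu⟩ :=
    Mg.exists_mem_ends_of_ncard_cut_eq_three hl hc hb hconn h5 (hcut ▸ hthree)
  exact ⟨u, hu e₁ (by simp [hcut]), hu e₂ (by simp [hcut]), hu e₃ (by simp [hcut])⟩
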